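/- arXiv:2002.05141 — 2 statements merged into one kernel-verified Lean document; each statement's English description precedes it below -/
import Mathlib

section
/- Let V be a symmetric positive definite q×q real matrix, let z ∈ ℝ^q, and set W = V + z zᵀ. Then zᵀ W⁻¹ z = 1 − det(V)/det(W), and consequently zᵀ W⁻¹ z ≤ log det(W) − log det(V). -/
open Matrix

section DetVecMulVec

variable {n : Type*} [Fintype n] [DecidableEq n]

theorem det_add_vecMulVec {R : Type*} [CommRing R] {A : Matrix n n R} (hA : IsUnit A.det)
    (u v : n → R) : (A + vecMulVec u v).det = A.det * (1 + v ⬝ᵥ A⁻¹ *ᵥ u) := by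
  rw [vecMulVec_eq Unit, det_add_replicateCol_mul_replicateRow hA, Matrix.mul_assoc,
    ← replicateCol_mulVec, det_one_add_mul_comm, det_one_add_replicateCol_mul_replicateRow]

theorem dotProduct_inv_add_vecMulVec_mulVec {K : Type*} [Field K] {V : Matrix n n K}
    {u v : n → K} (hW : (V + vecMulVec u v).det ≠ 0) :
    v ⬝ᵥ (V + vecMulVec u v)⁻¹ *ᵥ u = 1 - V.det / (V + vecMulVec u v).det := by
  -- `V` is itself a rank-one update of `W = V + u vᵀ`, namely `V = W + (-u) vᵀ`.
  have hdet : V.det =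
      (V + vecMulVec u v).det * (1 - v ⬝ᵥ (V + vecMulVec u v)⁻¹ *ᵥ u) := by
    simpa only [neg_vecMulVec, add_neg_cancel_right, mulVec_neg, dotProduct_neg,
      sub_eq_add_neg] using det_add_vecMulVec hW.isUnit (-u) v
  rw [hdet, mul_div_cancel_left₀ _ hW, sub_sub_cancel]

end DetVecMulVec

theorem posDef_add_vecMulVec_self_star {n R : Type*} [Finite n] [Ring R] [PartialOrder R]
    [StarRing R] [StarOrderedRing R] {V : Matrix n n R} (hV : V.PosDef) (z : n → R) :
    (V + vecMulVec z (star z)).PosDef :=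
  hV.add_posSemidef (posSemidef_vecMulVec_self_star z)

theorem one_sub_div_le_log_sub_log {a b : ℝ} (ha : 0 < a) (hb : 0 < b) :
    1 - a / b ≤ Real.log b - Real.log a := by
  simpa only [inv_div, Real.log_div hb.ne' ha.ne'] using
    Real.one_sub_inv_le_log_of_pos (div_pos hb ha)

theorem quadform_rank_one_update_general {n : Type*} [Fintype n] [DecidableEq n]
    {V : Matrix n n ℝ} {u v : n → ℝ} (hV : 0 < V.det) (hW : 0 < (V + vecMulVec u v).det) :
    v ⬝ᵥ ((V + vecMulVec u v)⁻¹ *ᵥ u) = 1 - V.det / (V + vecMulVec u v).det ∧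
      v ⬝ᵥ ((V + vecMulVec u v)⁻¹ *ᵥ u) ≤
        Real.log (V + vecMulVec u v).det - Real.log V.det := by
  have hquad := dotProduct_inv_add_vecMulVec_mulVec hW.ne'
  exact ⟨hquad, hquad.trans_le (one_sub_div_le_log_sub_log hV hW)⟩

/-- for a symmetric positive definite `V` and `W = V + z zᵀ`,
`zᵀ W⁻¹ z = 1 - det V / det W` and hence `zᵀ W⁻¹ z ≤ log det W - log det V`. -/
theorem quadform_rank_one_update {q : ℕ} (V : Matrix (Fin q) (Fin q) ℝ)
    (hV : V.PosDef) (z : Fin q → ℝ) :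
    z ⬝ᵥ ((V + vecMulVec z z)⁻¹ *ᵥ z) = 1 - V.det / (V + vecMulVec z z).det ∧
      z ⬝ᵥ ((V + vecMulVec z z)⁻¹ *ᵥ z) ≤
        Real.log (V + vecMulVec z z).det - Real.log V.det :=
  quadform_rank_one_update_general hV.det_pos (posDef_add_vecMulVec_self_star hV z).det_pos
end

section
/- Let u₀, u₁, …, u_{k−1} be independent random vectors in ℝ^m, each distributed as a standard Gaussian N(0, I_m), and let p ≥ 2. Form the mp × (k−p+1) block Toeplitz matrix U whose (i,j) block (for i = 1,…,p and j = 1,…,k−p+1) is the column vector u_{k−p+i−j} (so the first block column is (u_{k−p}, u_{k−p+1}, …, u_{k−1}) stacked and block columns shift the index down by one). Fix δ > 0. If k ≥ p + 128( m p² log 9 + p log 2 + p log(1/δ) ), then with probability at least 1 − δ, (1/2)(k−p+1) I ⪯ U Uᵀ ⪯ (3/2)(k−p+1) I, where I is the mp × mp identity. -/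
open Matrix MeasureTheory ProbabilityTheory

/-- The law of a vector of `m` i.i.d. standard Gaussians. -/
noncomputable def stdGaussianPi (m : ℕ) : Measure (Fin m → ℝ) :=
  Measure.pi (fun _ => gaussianReal 0 1)

/-- The `mp × (k-p+1)` block Toeplitz matrix whose `(i,j)` block (0-based) is the
column vector `u_{k-p+i-j}`. -/
def toepU {m : ℕ} (k p : ℕ) (hpk : p ≤ k) (u : Fin k → Fin m → ℝ) :
    Matrix (Fin p × Fin m) (Fin (k - p + 1)) ℝ :=
  Matrix.of fun ir j =>
    u ⟨k - p + (ir.1 : ℕ) - (j : ℕ), by have := ir.1.isLt; omega⟩ ir.2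

/-!
For a unit vector `w`, the Rayleigh quotient of `U Uᵀ` at `w` is `∑ j, (Uᵀ w) j ^ 2`, a sum of
`N = k - p + 1` squares of standard Gaussians. Columns of `U` whose indices are congruent modulo
`p` involve disjoint sets of the `u i`, so the summands split into `p` classes of independent ones.
Hölder's inequality over the classes reduces the exponential moment of the sum to that of a single
centred `χ²` variable, at the price of a factor `p` in the exponent: the sum deviates from `N` by
more than `ε N` with probability at most `2 exp (-ε² N / (8 p))`.

A maximal `1/4`-separated subset of the unit sphere has at most `9 ^ (m p)` points by comparing
volumes, and controlling the quadratic form of the symmetric matrix `U Uᵀ - N I` on it by `ε N / 2`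
bounds the operator norm by `ε N`. A union bound over this net finishes the proof.
-/

section ChiSquare

lemma one_le_one_sub_mul_exp_add_sq {x : ℝ} (hx : |x| ≤ 1 / 2) :
    1 ≤ (1 - x) * Real.exp (x + x ^ 2) := by
  have hhi := (abs_le.mp hx).2
  rcases le_total 0 x with h0 | h0
  · have hexp := Real.quadratic_le_exp_of_nonneg (x := x + x ^ 2) (by positivity)
    calc 1 ≤ (1 - x) * (1 + (x + x ^ 2) + (x + x ^ 2) ^ 2 / 2) := by
          nlinarith [mul_nonneg (sq_nonneg x) h0, pow_nonneg h0 3, pow_nonneg h0 4,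
            mul_nonneg (sq_nonneg x) (sub_nonneg.mpr hhi),
            mul_nonneg (pow_nonneg h0 4) (sub_nonneg.mpr hhi),
            mul_nonneg (pow_nonneg h0 3) (sub_nonneg.mpr hhi)]
      _ ≤ _ := by gcongr; linarith
  · calc 1 ≤ (1 - x) * (x + x ^ 2 + 1) := by nlinarith [mul_nonneg (sq_nonneg x) (neg_nonneg.2 h0)]
      _ ≤ _ := by gcongr; exacts [by linarith, Real.add_one_le_exp _]

lemma sqrt_one_div_le_exp {s : ℝ} (hs : |s| ≤ 1 / 4) :
    √(1 / (1 - 2 * s)) ≤ Real.exp (s + 2 * s ^ 2) := by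
  have hpos : 0 < 1 - 2 * s := by linarith [(abs_le.mp hs).2]
  have hx : |2 * s| ≤ 1 / 2 := by rw [abs_mul, abs_two]; linarith
  rw [Real.sqrt_le_left (Real.exp_pos _).le, ← Real.exp_nat_mul, div_le_iff₀' hpos]
  exact (one_le_one_sub_mul_exp_add_sq hx).trans_eq (by push_cast; ring_nf)

lemma lintegral_exp_mul_sq_sub_one_gaussianReal {s : ℝ} (hs : s < 1 / 2) :
    ∫⁻ x, ENNReal.ofReal (Real.exp (s * (x ^ 2 - 1))) ∂gaussianReal 0 1 =
      ENNReal.ofReal (Real.exp (-s) * √(1 / (1 - 2 * s))) := by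
  have hb : 0 < 1 / 2 - s := by linarith
  have hdensity (x : ℝ) :
      gaussianPDF 0 1 x * ENNReal.ofReal (Real.exp (s * (x ^ 2 - 1))) = ENNReal.ofReal
        ((√(2 * Real.pi))⁻¹ * Real.exp (-s) * Real.exp (-(1 / 2 - s) * x ^ 2)) := by
    rw [gaussianPDF, ← ENNReal.ofReal_mul (gaussianPDFReal_nonneg _ _ _), gaussianPDFReal]
    simp only [NNReal.coe_one, mul_one, sub_zero, mul_assoc, ← Real.exp_add]
    ring_nf
  have hsqrt : √(Real.pi / (1 / 2 - s)) = √(2 * Real.pi) * √(1 / (1 - 2 * s)) := by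
    rw [← Real.sqrt_mul (by positivity)]
    congr 1
    grind
  rw [gaussianReal_of_var_ne_zero 0 one_ne_zero,
    lintegral_withDensity_eq_lintegral_mul _ (by fun_prop) (by fun_prop)]
  simp only [Pi.mul_apply, hdensity]
  rw [← ofReal_integral_eq_lintegral_ofReal ((integrable_exp_neg_mul_sq hb).const_mul _)
    (.of_forall fun x => by positivity), integral_const_mul, integral_gaussian, hsqrt]
  congr 1
  field_simp

lemma lintegral_exp_mul_sq_sub_one_gaussianReal_le {s : ℝ} (hs : |s| ≤ 1 / 4) :
    ∫⁻ x, ENNReal.ofReal (Real.exp (s * (x ^ 2 - 1))) ∂gaussianReal 0 1 ≤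
      ENNReal.ofReal (Real.exp (2 * s ^ 2)) := by
  rw [lintegral_exp_mul_sq_sub_one_gaussianReal (by linarith [(abs_le.mp hs).2])]
  gcongr
  calc Real.exp (-s) * √(1 / (1 - 2 * s)) ≤ Real.exp (-s) * Real.exp (s + 2 * s ^ 2) := by
        gcongr; exact sqrt_one_div_le_exp hs
    _ = Real.exp (2 * s ^ 2) := by rw [← Real.exp_add]; ring_nf

end ChiSquare

section Net

open Metric Module NNReal

variable {E : Type*} [NormedAddCommGroup E] [NormedSpace ℝ E] [FiniteDimensional ℝ E]

lemma card_le_of_isSeparated_of_subset_closedBall {s : Finset E} {ε : ℝ≥0} {r : ℝ} (hε : 0 < ε)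
    (hr : 0 ≤ r) (hsep : IsSeparated ε (s : Set E)) (hball : (s : Set E) ⊆ closedBall 0 r) :
    (s.card : ℝ) ≤ (1 + 2 * r / ε) ^ finrank ℝ E := by
  borelize E
  let μ : Measure E := Measure.addHaar
  have hε2 : 0 < (ε / 2 : ℝ) := by positivity
  have hdisj : (s : Set E).PairwiseDisjoint fun c => ball c (ε / 2) := fun c hc d hd hcd =>
    ball_disjoint_ball <| by
      have hlt : (ε : ENNReal) < edist c d := hsep hc hd hcd
      rw [add_halves, ← ENNReal.ofReal_le_ofReal_iff dist_nonneg, ← edist_dist]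
      simpa using hlt.le
  have hsub : ⋃ c ∈ s, ball c (ε / 2 : ℝ) ⊆ ball 0 (r + ε / 2) :=
    Set.iUnion₂_subset fun c hc => ball_subset_ball' <| by linarith [mem_closedBall.mp (hball hc)]
  have hvol : s.card * ENNReal.ofReal ((ε / 2 : ℝ) ^ finrank ℝ E) * μ (ball 0 1) ≤
      ENNReal.ofReal ((r + ε / 2) ^ finrank ℝ E) * μ (ball 0 1) := by
    rw [← μ.addHaar_ball_of_pos 0 (by positivity)]
    refine (measure_mono hsub).trans' (le_of_eq ?_)
    rw [measure_biUnion_finset hdisj fun c _ => measurableSet_ball]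
    simp [μ.addHaar_ball_of_pos _ hε2, mul_assoc]
  rw [ENNReal.mul_le_mul_iff_left (measure_ball_pos _ _ one_pos).ne' measure_ball_lt_top.ne] at hvol
  have hreal := ENNReal.toReal_le_of_le_ofReal (by positivity) hvol
  rw [ENNReal.toReal_mul, ENNReal.toReal_natCast, ENNReal.toReal_ofReal (by positivity),
    ← le_div_iff₀ (by positivity), ← div_pow] at hreal
  exact hreal.trans_eq (by congr 1; field_simp; ring)

lemma packingNumber_ne_top {X : Type*} [PseudoMetricSpace X] {A : Set X} (hA : TotallyBounded A)
    {ε : ℝ≥0} (hε : 0 < ε) : packingNumber ε A ≠ ⊤ := by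
  obtain ⟨C, -, hC, hcover⟩ := exists_finite_isCover_of_totallyBounded (half_pos hε).ne' hA
  refine ne_top_of_le_ne_top (Set.encard_ne_top_iff.mpr hC) ?_
  calc packingNumber ε A = packingNumber (2 * (ε / 2)) A := by rw [mul_div_cancel₀ _ two_ne_zero]
    _ ≤ externalCoveringNumber (ε / 2) A := packingNumber_two_mul_le_externalCoveringNumber _ _
    _ ≤ C.encard := hcover.externalCoveringNumber_le_encard

lemma exists_finset_isCover_of_subset_closedBall {A : Set E} {ε : ℝ≥0} {r : ℝ} (hε : 0 < ε)
    (hr : 0 ≤ r) (hA : A ⊆ closedBall 0 r) :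
    ∃ s : Finset E, (s : Set E) ⊆ A ∧ IsCover ε A (s : Set E) ∧
      (s.card : ℝ) ≤ (1 + 2 * r / ε) ^ finrank ℝ E := by
  have htop : packingNumber ε A ≠ ⊤ :=
    packingNumber_ne_top ((isCompact_closedBall 0 r).totallyBounded.subset hA) hε
  have hfin : (maximalSeparatedSet ε A).Finite := by
    rwa [← Set.encard_ne_top_iff, encard_maximalSeparatedSet htop]
  have hsub : maximalSeparatedSet ε A ⊆ A := maximalSeparatedSet_subset
  refine ⟨hfin.toFinset, ?_, ?_, ?_⟩
  · simpa only [Set.Finite.coe_toFinset]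
  · simpa only [Set.Finite.coe_toFinset] using isCover_maximalSeparatedSet htop
  · refine card_le_of_isSeparated_of_subset_closedBall hε hr ?_ ?_ <;>
      rw [Set.Finite.coe_toFinset]
    exacts [isSeparated_maximalSeparatedSet, hsub.trans hA]

end Net

section QuadraticForm

open Metric NNReal
open RCLike (re)

variable {𝕜 E : Type*} [RCLike 𝕜] [NormedAddCommGroup E] [InnerProductSpace 𝕜 E]

lemma abs_reApplyInnerSelf_sub_le (T : E →L[𝕜] E) {x y : E} (hx : ‖x‖ = 1) (hy : ‖y‖ = 1) :
    |T.reApplyInnerSelf x - T.reApplyInnerSelf y| ≤ 2 * dist x y * ‖T‖ := by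
  have hsplit : T.reApplyInnerSelf x - T.reApplyInnerSelf y =
      re (inner 𝕜 (T (x - y)) x) + re (inner 𝕜 (T y) (x - y)) := by
    simp only [ContinuousLinearMap.reApplyInnerSelf_apply, map_sub, inner_sub_left, inner_sub_right]
    ring
  have hleft : |re (inner 𝕜 (T (x - y)) x)| ≤ ‖T‖ * ‖x - y‖ := by
    grw [RCLike.abs_re_le_norm, norm_inner_le_norm, T.le_opNorm, hx, mul_one]
  have hright : |re (inner 𝕜 (T y) (x - y))| ≤ ‖T‖ * ‖x - y‖ := by
    grw [RCLike.abs_re_le_norm, norm_inner_le_norm, T.le_opNorm, hy, mul_one]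
  grw [hsplit, abs_add_le, hleft, hright, dist_eq_norm]
  exact le_of_eq (by ring)

lemma norm_le_of_isCover_sphere {T : E →L[𝕜] E} (hT : T.IsSymmetric) {N : Set E} {ε : ℝ≥0}
    (hN : N ⊆ sphere 0 1) (hcover : IsCover ε (sphere 0 1) N) (hε : 2 * (ε : ℝ) < 1) {t : ℝ}
    (ht : 0 ≤ t) (hquad : ∀ y ∈ N, |T.reApplyInnerSelf y| ≤ t) : ‖T‖ ≤ t / (1 - 2 * ε) := by
  have hsphere (x : E) (hx : ‖x‖ = 1) : |T.rayleighQuotient x| ≤ t + 2 * ε * ‖T‖ := by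
    obtain ⟨y, hyN, hxy⟩ := hcover (mem_sphere_zero_iff_norm.mpr hx)
    have hdist : dist x y ≤ ε := by
      rw [← ENNReal.ofReal_le_ofReal_iff ε.coe_nonneg, ← edist_dist]
      simpa using hxy
    have hsub := abs_reApplyInnerSelf_sub_le T hx (mem_sphere_zero_iff_norm.mp (hN hyN))
    calc |T.rayleighQuotient x| = |T.reApplyInnerSelf x| := by
          rw [ContinuousLinearMap.rayleighQuotient, hx, one_pow, div_one]
      _ ≤ |T.reApplyInnerSelf y| + |T.reApplyInnerSelf x - T.reApplyInnerSelf y| := by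
          grw [← abs_sub_abs_le_abs_sub]
          exact le_of_eq (by ring)
      _ ≤ t + 2 * ε * ‖T‖ := by grw [hsub, hquad y hyN, hdist]
  have hnorm : ‖T‖ ≤ t + 2 * ε * ‖T‖ := by
    rw [T.norm_eq_iSup_rayleighQuotient hT]
    refine ciSup_le fun x => ?_
    rw [← T.norm_eq_iSup_rayleighQuotient hT]
    rcases eq_or_ne x 0 with rfl | hx
    · rw [T.rayleighQuotient_apply_zero, abs_zero]
      positivity
    · rw [← T.rayleigh_smul x (c := (‖x‖⁻¹ : 𝕜)) (by simpa using hx)]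
      exact hsphere _ (norm_smul_inv_norm hx)
  rw [le_div_iff₀ (by linarith)]
  linarith

end QuadraticForm

section Coloring

open scoped ENNReal

variable {Ω J C : Type*} {mΩ : MeasurableSpace Ω} {P : Measure Ω} {c : J → C} [Fintype J]

-- Hölder's inequality with equal exponents across the fibres of `c`, independence inside each.
lemma lintegral_prod_rpow_le_of_iIndepFun_fiber [Fintype C] [Nonempty C] {f : J → Ω → ℝ≥0∞}
    (hf : ∀ j, Measurable (f j)) (hind : ∀ r, iIndepFun (fun j : {j // c j = r} => f j) P) :
    ∫⁻ ω, ∏ j, f j ω ^ (1 / Fintype.card C : ℝ) ∂P ≤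
      ∏ j, (∫⁻ ω, f j ω ∂P) ^ (1 / Fintype.card C : ℝ) := by
  classical
  set q : ℝ := 1 / Fintype.card C
  have hq : 0 ≤ q := by positivity
  have hsum : ∑ _r : C, q = 1 := by simp [q]
  have hfiber (g : J → ℝ≥0∞) : ∏ j, g j ^ q = ∏ r, (∏ j : {j // c j = r}, g j) ^ q := by
    simp only [← ENNReal.prod_rpow_of_nonneg hq, Fintype.prod_fiberwise c fun j => g j ^ q]
  have hHolder : ∫⁻ ω, ∏ r, (∏ j : {j // c j = r}, f j ω) ^ q ∂P ≤
      ∏ r, (∫⁻ ω, ∏ j : {j // c j = r}, f j ω ∂P) ^ q :=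
    ENNReal.lintegral_prod_norm_pow_le Finset.univ (fun r _ => Measurable.aemeasurable <|
      Finset.measurable_fun_prod _ fun (j : {j // c j = r}) _ => hf j) hsum fun _ _ => hq
  have hindep (r : C) : ∫⁻ ω, ∏ j : {j // c j = r}, f j ω ∂P =
      ∏ j : {j // c j = r}, ∫⁻ ω, f j ω ∂P :=
    lintegral_prod_eq_prod_lintegral_of_indepFun Finset.univ _ (hind r) fun j => hf j
  simp only [hfiber]
  simpa only [hindep] using hHolder

/-- A family of standard Gaussian variables whose indices carry colours, such that the variables of
any one colour are independent. Nothing is assumed across colours, and the number of colours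
measures how far the family is from being independent. -/
structure IsColoredStdGaussian (c : J → C) (Y : J → Ω → ℝ) (P : Measure Ω) : Prop where
  measurePreserving (j : J) : MeasurePreserving (Y j) P (gaussianReal 0 1)
  iIndepFun_fiber (r : C) : iIndepFun (fun j : {j // c j = r} => Y j) P

namespace IsColoredStdGaussian

variable {Y : J → Ω → ℝ}

lemma measurable_sum_sq_sub_one (hY : IsColoredStdGaussian c Y P) :
    Measurable fun ω => ∑ j, (Y j ω ^ 2 - 1) :=
  Finset.measurable_fun_sum _ fun j _ =>
    ((hY.measurePreserving j).measurable.pow_const 2).sub_const 1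

variable [Fintype C] [Nonempty C]

lemma lintegral_exp_le (hY : IsColoredStdGaussian c Y P) {s : ℝ} (hs : |s| ≤ 1 / 4) :
    ∫⁻ ω, ENNReal.ofReal (Real.exp (s * (∑ j, (Y j ω ^ 2 - 1)) / Fintype.card C)) ∂P ≤
      ENNReal.ofReal (Real.exp (2 * s ^ 2 * Fintype.card J / Fintype.card C)) := by
  set q : ℝ := 1 / Fintype.card C
  let g (x : ℝ) : ℝ≥0∞ := ENNReal.ofReal (Real.exp (s * (x ^ 2 - 1)))
  have hg : Measurable g := by fun_prop
  have hexp (ω : Ω) : ENNReal.ofReal (Real.exp (s * (∑ j, (Y j ω ^ 2 - 1)) / Fintype.card C)) =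
      ∏ j, g (Y j ω) ^ q := by
    simp only [g, ENNReal.ofReal_rpow_of_pos (Real.exp_pos _), ← Real.exp_mul]
    rw [← ENNReal.ofReal_prod_of_nonneg fun _ _ => (Real.exp_pos _).le, ← Real.exp_sum,
      ← Finset.sum_mul, ← Finset.mul_sum, mul_one_div]
  calc _ = ∫⁻ ω, ∏ j, g (Y j ω) ^ q ∂P := by simp only [hexp]
    _ ≤ ∏ j, (∫⁻ ω, g (Y j ω) ∂P) ^ q :=
        lintegral_prod_rpow_le_of_iIndepFun_fiber
          (fun j => hg.comp (hY.measurePreserving j).measurable)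
          fun r => (hY.iIndepFun_fiber r).comp (fun _ => g) fun _ => hg
    _ ≤ ∏ _j : J, ENNReal.ofReal (Real.exp (2 * s ^ 2)) ^ q := by
        gcongr with j
        rw [(hY.measurePreserving j).lintegral_comp hg]
        exact lintegral_exp_mul_sq_sub_one_gaussianReal_le hs
    _ = _ := by
        simp only [q]
        rw [Finset.prod_const, Finset.card_univ, ENNReal.ofReal_rpow_of_pos (Real.exp_pos _),
          ← Real.exp_mul, ← ENNReal.ofReal_pow (Real.exp_pos _).le, ← Real.exp_nat_mul]
        ring_nf

lemma measure_le_mul_sum_sq_sub_one_le (hY : IsColoredStdGaussian c Y P) {s : ℝ} (hs : |s| ≤ 1 / 4)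
    (a : ℝ) :
    P {ω | a ≤ s * ∑ j, (Y j ω ^ 2 - 1)} ≤
      ENNReal.ofReal (Real.exp ((2 * s ^ 2 * Fintype.card J - a) / Fintype.card C)) := by
  let X (ω : Ω) : ℝ≥0∞ :=
    ENNReal.ofReal (Real.exp (s * (∑ j, (Y j ω ^ 2 - 1)) / Fintype.card C))
  have hX : Measurable X := by
    have := hY.measurable_sum_sq_sub_one
    fun_prop
  calc P {ω | a ≤ s * ∑ j, (Y j ω ^ 2 - 1)}
      ≤ P {ω | ENNReal.ofReal (Real.exp (a / Fintype.card C)) ≤ X ω} := by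
        refine measure_mono fun ω (hω : a ≤ _) => ?_
        exact ENNReal.ofReal_le_ofReal (by gcongr)
    _ ≤ (∫⁻ ω, X ω ∂P) / ENNReal.ofReal (Real.exp (a / Fintype.card C)) :=
        meas_ge_le_lintegral_div hX.aemeasurable (by simp [Real.exp_pos]) ENNReal.ofReal_ne_top
    _ ≤ _ := by
        grw [hY.lintegral_exp_le hs]
        rw [← ENNReal.ofReal_div_of_pos (Real.exp_pos _), ← Real.exp_sub, sub_div]

lemma measure_lt_abs_sum_sq_sub_card_le (hY : IsColoredStdGaussian c Y P) {ε : ℝ} (hε : 0 ≤ ε)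
    (hε' : ε ≤ 1) :
    P {ω | ε * Fintype.card J < |∑ j, Y j ω ^ 2 - Fintype.card J|} ≤
      2 * ENNReal.ofReal (Real.exp (-(ε ^ 2 * Fintype.card J) / (8 * Fintype.card C))) := by
  set n := (Fintype.card J : ℝ)
  -- `s = ε / 4` minimises the Chernoff exponent `2 * s ^ 2 * n - s * (ε * n)`.
  have htail (s : ℝ) (hs : |s| = ε / 4) :
      P {ω | ε ^ 2 * n / 4 ≤ s * ∑ j, (Y j ω ^ 2 - 1)} ≤
        ENNReal.ofReal (Real.exp (-(ε ^ 2 * n) / (8 * Fintype.card C))) := by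
    refine (hY.measure_le_mul_sum_sq_sub_one_le (hs.trans_le (by linarith)) _).trans_eq ?_
    rw [← sq_abs, hs]
    congr 2
    field_simp
    ring
  have hsub : {ω | ε * n < |∑ j, Y j ω ^ 2 - n|} ⊆
      {ω | ε ^ 2 * n / 4 ≤ (ε / 4) * ∑ j, (Y j ω ^ 2 - 1)} ∪
        {ω | ε ^ 2 * n / 4 ≤ -(ε / 4) * ∑ j, (Y j ω ^ 2 - 1)} := by
    intro ω hω
    have hsum : ∑ j, (Y j ω ^ 2 - 1) = ∑ j, Y j ω ^ 2 - n := by simp [n]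
    simp only [Set.mem_union, Set.mem_ofPred_eq, hsum] at hω ⊢
    rcases lt_abs.mp hω with h | h
    · left; nlinarith
    · right; nlinarith
  rw [two_mul]
  exact (measure_mono hsub).trans <| (measure_union_le _ _).trans <| add_le_add
    (htail _ (abs_of_nonneg (by linarith))) (htail _ (by rw [abs_neg, abs_of_nonneg (by linarith)]))

end IsColoredStdGaussian

end Coloring

section GaussianVector

open scoped RealInnerProductSpace

variable {Ω E : Type*} {mΩ : MeasurableSpace Ω} {P : Measure Ω} [NormedAddCommGroup E]
  [InnerProductSpace ℝ E] [FiniteDimensional ℝ E] [MeasurableSpace E] [BorelSpace E] {X : Ω → E}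

lemma measurePreserving_inner_of_stdGaussian (hX : MeasurePreserving X P (stdGaussian E)) {v : E}
    (hv : ‖v‖ = 1) : MeasurePreserving (fun ω => ⟪v, X ω⟫) P (gaussianReal 0 1) := by
  have hlaw : (stdGaussian E).map (innerSL ℝ v) = gaussianReal 0 1 := by
    rw [IsGaussian.map_eq_gaussianReal, integral_strongDual_stdGaussian,
      variance_dual_stdGaussian, innerSL_apply_norm, hv, one_pow, Real.toNNReal_one]
  exact (⟨(innerSL ℝ v).continuous.measurable, hlaw⟩ : MeasurePreserving _ _ _).comp hX

lemma covariance_inner_of_stdGaussian (hX : MeasurePreserving X P (stdGaussian E)) (v w : E) :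
    cov[fun ω => ⟪v, X ω⟫, fun ω => ⟪w, X ω⟫; P] = ⟪v, w⟫ := by
  have hcov := covarianceBilin_apply_eq_cov (μ := stdGaussian E) IsGaussian.memLp_two_id v w
  rw [covarianceBilin_stdGaussian, innerSL_apply_apply, ← hX.map_eq] at hcov
  rw [hcov, covariance_map (by fun_prop) (by fun_prop) hX.aemeasurable]
  rfl

lemma iIndepFun_inner_of_stdGaussian (hX : MeasurePreserving X P (stdGaussian E)) {ι : Type*}
    [Finite ι] {v : ι → E} (hv : Pairwise fun i j => ⟪v i, v j⟫ = 0) :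
    iIndepFun (fun i ω => ⟪v i, X ω⟫) P := by
  cases nonempty_fintype ι
  have hgauss : HasGaussianLaw X P := ⟨by rw [hX.map_eq]; infer_instance⟩
  let L : E →L[ℝ] ι → ℝ := ContinuousLinearMap.pi fun i => innerSL ℝ (v i)
  have hproj : HasGaussianLaw (fun ω i => ⟪v i, X ω⟫) P := hgauss.map_fun L
  refine hproj.iIndepFun_of_covariance_eq_zero fun i j hij => ?_
  rw [covariance_inner_of_stdGaussian hX, hv hij]

lemma isColoredStdGaussian_inner (hX : MeasurePreserving X P (stdGaussian E)) {J C : Type*}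
    [Finite J] {c : J → C} {v : J → E} (hv : ∀ j, ‖v j‖ = 1)
    (horth : ∀ i j, i ≠ j → c i = c j → ⟪v i, v j⟫ = 0) :
    IsColoredStdGaussian c (fun j ω => ⟪v j, X ω⟫) P where
  measurePreserving j := measurePreserving_inner_of_stdGaussian hX (hv j)
  iIndepFun_fiber r := iIndepFun_inner_of_stdGaussian hX (v := fun j : {j // c j = r} => v j)
    fun i j hij => horth i j (Subtype.coe_ne_coe.mpr hij) (i.2.trans j.2.symm)

lemma measurePreserving_toLp_pi_pi (ι κ : Type*) [Fintype ι] [Fintype κ] :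
    MeasurePreserving (fun u : ι → κ → ℝ => WithLp.toLp 2 fun a : ι × κ => u a.1 a.2)
      (.pi fun _ => .pi fun _ => gaussianReal 0 1) (stdGaussian (EuclideanSpace ℝ (ι × κ))) := by
  have huncurry := Measure.infinitePi_map_curry_symm fun (_ : ι) (_ : κ) => gaussianReal 0 1
  simp only [Measure.infinitePi_eq_pi] at huncurry
  have htoLp : MeasurePreserving (WithLp.toLp 2 : (ι × κ → ℝ) → _) (.pi fun _ => gaussianReal 0 1)
      (stdGaussian (EuclideanSpace ℝ (ι × κ))) := ⟨by fun_prop, map_pi_eq_stdGaussian⟩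
  exact htoLp.comp ⟨(MeasurableEquiv.curry ι κ ℝ).symm.measurable, huncurry⟩

lemma isColoredStdGaussian_sum_mul_eval {I J K C : Type*} [Fintype I] [Finite J] [Fintype K]
    {X : Ω → EuclideanSpace ℝ K} (hX : MeasurePreserving X P (stdGaussian (EuclideanSpace ℝ K)))
    {c : J → C} {φ : J → I → K}
    (hφ : ∀ j, (φ j).Injective) (hdisj : ∀ i j, i ≠ j → c i = c j → ∀ a b, φ i a ≠ φ j b)
    {w : EuclideanSpace ℝ I} (hw : ‖w‖ = 1) :
    IsColoredStdGaussian c (fun j ω => ∑ a, w a * X ω (φ j a)) P := by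
  classical
  let e := EuclideanSpace.basisFun K ℝ
  let v (j : J) : EuclideanSpace ℝ K := ∑ a, w a • e (φ j a)
  have hinner (i j : J) : ⟪v i, v j⟫ = ∑ a, ∑ b, w a * w b * ⟪e (φ i a), e (φ j b)⟫ := by
    simp_rw [v, sum_inner, inner_sum, real_inner_smul_left, real_inner_smul_right, mul_assoc]
  have hnorm (j : J) : ‖v j‖ = 1 := by
    rw [← sq_eq_sq₀ (norm_nonneg _) zero_le_one, ← hw, ← real_inner_self_eq_norm_sq, hinner,
      EuclideanSpace.real_norm_sq_eq]
    simp [e.inner_eq_ite, (hφ j).eq_iff, sq]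
  have horth (i j : J) (hij : i ≠ j) (hc : c i = c j) : ⟪v i, v j⟫ = 0 := by
    simp [hinner, e.inner_eq_zero (hdisj i j hij hc _ _)]
  have heval (j : J) (x : EuclideanSpace ℝ K) : ⟪v j, x⟫ = ∑ a, w a * x (φ j a) := by
    simp [v, e, sum_inner, real_inner_smul_left, EuclideanSpace.inner_single_left]
  simpa only [heval] using isColoredStdGaussian_inner hX hnorm horth

end GaussianVector

section GramMatrix

open Metric NNReal
open scoped Matrix.Norms.L2Operator

variable {I : Type*} [Fintype I] [DecidableEq I]

lemma posSemidef_smul_one_sub_of_norm_le {A : Matrix I I ℝ} (hA : A.IsHermitian) {t : ℝ}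
    (ht : ‖A‖ ≤ t) : (t • (1 : Matrix I I ℝ) - A).PosSemidef := by
  refine .of_dotProduct_mulVec_nonneg ((isHermitian_one.smul (.all t)).sub hA) fun x => ?_
  let y : EuclideanSpace ℝ I := WithLp.toLp 2 x
  have hy : x ⬝ᵥ x = ‖y‖ ^ 2 := by
    rw [← real_inner_self_eq_norm_sq, EuclideanSpace.inner_eq_star_dotProduct, star_trivial]
  have hquad : x ⬝ᵥ A *ᵥ x ≤ t * ‖y‖ ^ 2 := calc
    x ⬝ᵥ A *ᵥ x = inner ℝ y (toEuclideanCLM (𝕜 := ℝ) A y) := (inner_toEuclideanCLM A y y).symm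
    _ ≤ ‖y‖ * (t * ‖y‖) := by
      grw [real_inner_le_norm, ContinuousLinearMap.le_opNorm, l2_opNorm_toEuclideanCLM, ht]
    _ = t * ‖y‖ ^ 2 := by ring
  rw [star_trivial, sub_mulVec, smul_mulVec, one_mulVec, dotProduct_sub, dotProduct_smul, hy,
    smul_eq_mul]
  linarith

lemma posSemidef_of_norm_sub_smul_one_le {A : Matrix I I ℝ} (hA : A.IsHermitian) {a t : ℝ}
    (ht : ‖A - a • (1 : Matrix I I ℝ)‖ ≤ t) :
    (A - (a - t) • (1 : Matrix I I ℝ)).PosSemidef ∧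
      ((a + t) • (1 : Matrix I I ℝ) - A).PosSemidef := by
  have hB : (A - a • (1 : Matrix I I ℝ)).IsHermitian := hA.sub (isHermitian_one.smul (.all a))
  constructor
  · convert posSemidef_smul_one_sub_of_norm_le hB.neg ((norm_neg _).trans_le ht) using 1
    module
  · convert posSemidef_smul_one_sub_of_norm_le hB ht using 1
    module

variable {J : Type*} [Fintype J]

lemma reApplyInnerSelf_toEuclideanCLM_mul_transpose_sub_smul_one (U : Matrix I J ℝ) (a : ℝ)
    (w : EuclideanSpace ℝ I) :
    (toEuclideanCLM (𝕜 := ℝ) (U * Uᵀ - a • (1 : Matrix I I ℝ))).reApplyInnerSelf w =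
      ∑ j, (Uᵀ *ᵥ w.ofLp) j ^ 2 - a * ‖w‖ ^ 2 := by
  rw [ContinuousLinearMap.reApplyInnerSelf_apply, RCLike.re_to_real, real_inner_comm,
    inner_toEuclideanCLM, sub_mulVec, dotProduct_sub, smul_mulVec, one_mulVec, dotProduct_smul,
    ← mulVec_mulVec, dotProduct_mulVec, ← mulVec_transpose, EuclideanSpace.real_norm_sq_eq]
  simp only [dotProduct, sq, smul_eq_mul]

lemma norm_mul_transpose_sub_smul_one_le_of_isCover_sphere {N : Set (EuclideanSpace ℝ I)} {ε : ℝ≥0}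
    (hN : N ⊆ sphere 0 1) (hcover : IsCover ε (sphere 0 1) N) (hε : 2 * (ε : ℝ) < 1)
    {U : Matrix I J ℝ} {a t : ℝ} (ht : 0 ≤ t)
    (hquad : ∀ w ∈ N, |∑ j, (Uᵀ *ᵥ w.ofLp) j ^ 2 - a| ≤ t) :
    ‖U * Uᵀ - a • (1 : Matrix I I ℝ)‖ ≤ t / (1 - 2 * ε) := by
  have hherm : (U * Uᵀ - a • (1 : Matrix I I ℝ)).IsHermitian :=
    (isHermitian_mul_conjTranspose_self U).sub (isHermitian_one.smul (.all a))
  rw [← l2_opNorm_toEuclideanCLM]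
  refine norm_le_of_isCover_sphere (isSymmetric_toEuclideanLin_iff.mpr hherm) hN hcover hε ht
    fun w hw => ?_
  rw [reApplyInnerSelf_toEuclideanCLM_mul_transpose_sub_smul_one,
    mem_sphere_zero_iff_norm.mp (hN hw), one_pow, mul_one]
  exact hquad w hw

variable {Ω C : Type*} {mΩ : MeasurableSpace Ω} {P : Measure Ω} [Fintype C] [Nonempty C]
  {c : J → C} {U : Ω → Matrix I J ℝ}

lemma measure_lt_norm_mul_transpose_sub_card_smul_one_le_of_isCover
    (hU : ∀ w : EuclideanSpace ℝ I, ‖w‖ = 1 →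
      IsColoredStdGaussian c (fun j ω => ((U ω)ᵀ *ᵥ w.ofLp) j) P)
    {N : Finset (EuclideanSpace ℝ I)} (hN : (N : Set (EuclideanSpace ℝ I)) ⊆ sphere 0 1)
    (hcover : IsCover (1 / 4) (sphere 0 1) (N : Set (EuclideanSpace ℝ I)))
    {ε : ℝ} (hε : 0 ≤ ε) (hε' : ε ≤ 2) :
    P {ω | ε * Fintype.card J < ‖U ω * (U ω)ᵀ - (Fintype.card J : ℝ) • (1 : Matrix I I ℝ)‖} ≤
      ENNReal.ofReal (2 * N.card *
        Real.exp (-(ε ^ 2 * Fintype.card J) / (32 * Fintype.card C))) := by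
  set n := (Fintype.card J : ℝ)
  set b := Real.exp (-(ε ^ 2 * n) / (32 * Fintype.card C))
  have hpoint (w : EuclideanSpace ℝ I) (hw : w ∈ N) :
      P {ω | ε / 2 * n < |∑ j, ((U ω)ᵀ *ᵥ w.ofLp) j ^ 2 - n|} ≤ 2 * ENNReal.ofReal b := by
    refine ((hU w (mem_sphere_zero_iff_norm.mp (hN hw))).measure_lt_abs_sum_sq_sub_card_le
      (by positivity) (by linarith)).trans_eq ?_
    congr 3
    ring
  have hunion : {ω | ε * n < ‖U ω * (U ω)ᵀ - n • (1 : Matrix I I ℝ)‖} ⊆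
      ⋃ w ∈ N, {ω | ε / 2 * n < |∑ j, ((U ω)ᵀ *ᵥ w.ofLp) j ^ 2 - n|} := by
    intro ω hω
    by_contra! hnot
    simp only [Set.mem_iUnion, Set.mem_ofPred_eq, not_exists, not_lt] at hnot hω
    have hnorm := norm_mul_transpose_sub_smul_one_le_of_isCover_sphere hN hcover (by norm_num)
      (by positivity) hnot
    norm_num at hnorm
    linarith
  calc _ ≤ ∑ w ∈ N, P {ω | ε / 2 * n < |∑ j, ((U ω)ᵀ *ᵥ w.ofLp) j ^ 2 - n|} :=
        (measure_mono hunion).trans (measure_biUnion_finset_le _ _)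
    _ ≤ N.card * (2 * ENNReal.ofReal b) := by
        rw [← nsmul_eq_mul]
        exact Finset.sum_le_card_nsmul _ _ _ hpoint
    _ = ENNReal.ofReal (2 * N.card * b) := by
        rw [ENNReal.ofReal_mul (by positivity), ENNReal.ofReal_mul zero_le_two,
          ENNReal.ofReal_ofNat, ENNReal.ofReal_natCast]
        ring

lemma measure_lt_norm_mul_transpose_sub_card_smul_one_le
    (hU : ∀ w : EuclideanSpace ℝ I, ‖w‖ = 1 →
      IsColoredStdGaussian c (fun j ω => ((U ω)ᵀ *ᵥ w.ofLp) j) P)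
    {ε : ℝ} (hε : 0 ≤ ε) (hε' : ε ≤ 2) :
    P {ω | ε * Fintype.card J < ‖U ω * (U ω)ᵀ - (Fintype.card J : ℝ) • (1 : Matrix I I ℝ)‖} ≤
      ENNReal.ofReal (2 * 9 ^ Fintype.card I *
        Real.exp (-(ε ^ 2 * Fintype.card J) / (32 * Fintype.card C))) := by
  obtain ⟨N, hN, hcover, hcard⟩ := exists_finset_isCover_of_subset_closedBall (r := 1)
    (ε := 1 / 4) (by norm_num) zero_le_one (sphere_subset_closedBall (α := EuclideanSpace ℝ I))
  have hcard_le : (N.card : ℝ) ≤ 9 ^ Fintype.card I := by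
    rw [finrank_euclideanSpace] at hcard
    norm_num at hcard
    exact hcard
  grw [measure_lt_norm_mul_transpose_sub_card_smul_one_le_of_isCover hU hN hcover hε hε', hcard_le]

end GramMatrix

section Toeplitz

variable {m k p : ℕ} (hpk : p ≤ k)

/-- Position, in the stacked vector `(u₀, …, u_{k-1})`, of the entry of `toepU` in row `a` and
column `j`. -/
def toepIndex (j : Fin (k - p + 1)) (a : Fin p × Fin m) : Fin k × Fin m :=
  (⟨k - p + a.1 - j, by have := Nat.sub_add_cancel hpk; omega⟩, a.2)

lemma toepIndex_injective (j : Fin (k - p + 1)) : (toepIndex (m := m) hpk j).Injective := by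
  rintro ⟨i, r⟩ ⟨i', r'⟩ h
  simp only [toepIndex, Prod.mk.injEq, Fin.mk.injEq] at h
  exact Prod.ext (Fin.ext (by dsimp only; omega)) h.2

lemma toepIndex_ne_of_modEq {j j' : Fin (k - p + 1)} (hne : j ≠ j')
    (hmod : (j : ℕ) ≡ j' [MOD p]) (a b : Fin p × Fin m) :
    toepIndex hpk j a ≠ toepIndex hpk j' b := by
  intro h
  have hval : k - p + (a.1 : ℕ) - j = k - p + (b.1 : ℕ) - j' := congrArg (fun x => x.1.val) h
  have hdiff : (j' : ℤ) - j = b.1 - a.1 := by omega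
  refine hne (Fin.ext ?_)
  have hzero := Int.eq_zero_of_abs_lt_dvd (Nat.modEq_iff_dvd.mp hmod) (by rw [abs_lt]; omega)
  omega

lemma isColoredStdGaussian_toepU_transpose_mulVec {w : EuclideanSpace ℝ (Fin p × Fin m)}
    (hw : ‖w‖ = 1) :
    IsColoredStdGaussian (fun j : Fin (k - p + 1) => ((j : ℕ) : ZMod p))
      (fun j u => ((toepU k p hpk u)ᵀ *ᵥ w.ofLp) j) (.pi fun _ => stdGaussianPi m) := by
  have hsample := isColoredStdGaussian_sum_mul_eval (measurePreserving_toLp_pi_pi (Fin k) (Fin m))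
    (c := fun j : Fin (k - p + 1) => ((j : ℕ) : ZMod p)) (toepIndex_injective hpk)
    (fun j j' hne hc =>
      toepIndex_ne_of_modEq hpk hne ((ZMod.natCast_eq_natCast_iff _ _ _).mp hc)) hw
  simp only [mulVec, dotProduct, mul_comm _ (w.ofLp _)]
  exact hsample

end Toeplitz

lemma two_mul_nine_pow_mul_exp_le {m k p : ℕ} (hp : 0 < p) {δ ε : ℝ} (hδ : 0 < δ) (hε : 0 < ε)
    (hk : (p : ℝ) + 32 / ε ^ 2 * (m * p ^ 2 * Real.log 9 + p * Real.log 2 +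
      p * Real.log (1 / δ)) ≤ k) :
    2 * 9 ^ (p * m) * Real.exp (-(ε ^ 2 * ((k : ℝ) - p + 1)) / (32 * p)) ≤ δ := by
  have hlog : p * m * Real.log 9 + Real.log 2 - Real.log δ ≤
      ε ^ 2 * ((k : ℝ) - p + 1) / (32 * p) := by
    rw [one_div, Real.log_inv] at hk
    have hk' : 32 / ε ^ 2 * (m * p ^ 2 * Real.log 9 + p * Real.log 2 + p * -Real.log δ) ≤
      k - p + 1 := by linarith
    rw [div_mul_eq_mul_div, div_le_iff₀' (by positivity)] at hk'
    rw [le_div_iff₀ (by positivity)]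
    linarith
  calc 2 * 9 ^ (p * m) * Real.exp (-(ε ^ 2 * ((k : ℝ) - p + 1)) / (32 * p))
      = Real.exp (p * m * Real.log 9 + Real.log 2 - ε ^ 2 * ((k : ℝ) - p + 1) / (32 * p)) := by
        rw [sub_eq_add_neg (_ + _), ← neg_div, Real.exp_add, Real.exp_add, Real.exp_log two_pos,
          ← Nat.cast_mul, ← Real.log_pow, Real.exp_log (by positivity), mul_comm 2]
    _ ≤ Real.exp (Real.log δ) := by gcongr; linarith
    _ = δ := Real.exp_log hδ

lemma ofReal_one_sub_le_of_measure_compl_le {Ω : Type*} {mΩ : MeasurableSpace Ω} {P : Measure Ω}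
    [IsProbabilityMeasure P] {s : Set Ω} {δ : ℝ} (hδ : 0 ≤ δ) (hs : P sᶜ ≤ ENNReal.ofReal δ) :
    ENNReal.ofReal (1 - δ) ≤ P s := by
  rw [ENNReal.ofReal_sub _ hδ, ENNReal.ofReal_one, tsub_le_iff_right, ← measure_univ (μ := P)]
  grw [measure_univ_le_add_compl s, hs]

open scoped Matrix.Norms.L2Operator in
theorem toeplitz_gaussian_pe_general {m k p : ℕ} (hp : 0 < p) (hpk : p ≤ k) {δ ε : ℝ}
    (hδ : 0 < δ) (hε : 0 < ε) (hε' : ε ≤ 2)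
    (hk : (p : ℝ) + 32 / ε ^ 2 * (m * p ^ 2 * Real.log 9 + p * Real.log 2 +
      p * Real.log (1 / δ)) ≤ k) :
    ENNReal.ofReal (1 - δ) ≤
      (Measure.pi fun _ : Fin k => stdGaussianPi m)
        {u | (toepU k p hpk u * (toepU k p hpk u)ᵀ - ((1 - ε) * ((k : ℝ) - p + 1)) •
                (1 : Matrix (Fin p × Fin m) (Fin p × Fin m) ℝ)).PosSemidef ∧
          (((1 + ε) * ((k : ℝ) - p + 1)) • (1 : Matrix (Fin p × Fin m) (Fin p × Fin m) ℝ) -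
            toepU k p hpk u * (toepU k p hpk u)ᵀ).PosSemidef} := by
  have : NeZero p := ⟨hp.ne'⟩
  have : IsProbabilityMeasure (stdGaussianPi m) := by unfold stdGaussianPi; infer_instance
  have hn : (Fintype.card (Fin (k - p + 1)) : ℝ) = k - p + 1 := by
    rw [Fintype.card_fin, Nat.cast_add_one, Nat.cast_sub hpk]
  have htail := measure_lt_norm_mul_transpose_sub_card_smul_one_le
    (fun _ => isColoredStdGaussian_toepU_transpose_mulVec (m := m) hpk) hε.le hε'
  rw [hn, Fintype.card_prod, Fintype.card_fin, Fintype.card_fin, ZMod.card] at htail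
  refine ofReal_one_sub_le_of_measure_compl_le hδ.le <| (measure_mono fun u hu => ?_).trans <|
    htail.trans <| ENNReal.ofReal_le_ofReal <| two_mul_nine_pow_mul_exp_le hp hδ hε hk
  by_contra hle
  have hnorm := posSemidef_of_norm_sub_smul_one_le
    (isHermitian_mul_conjTranspose_self (toepU k p hpk u)) (not_lt.mp hle)
  rw [← one_sub_mul, ← one_add_mul] at hnorm
  exact hu hnorm

/-- persistency of excitation of the Gaussian block Toeplitz matrix:
if `k ≥ p + 128(m p² log 9 + p log 2 + p log(1/δ))` then with probability at least
`1 - δ`, `(1/2)(k-p+1) I ⪯ U Uᵀ ⪯ (3/2)(k-p+1) I`. -/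
theorem toeplitz_gaussian_pe {m k p : ℕ} (hp : 2 ≤ p) (hpk : p ≤ k)
    (δ : ℝ) (hδ : 0 < δ)
    (hk : (p : ℝ) + 128 * (m * p ^ 2 * Real.log 9 + p * Real.log 2 +
        p * Real.log (1 / δ)) ≤ (k : ℝ)) :
    ENNReal.ofReal (1 - δ) ≤
      (Measure.pi fun _ : Fin k => stdGaussianPi m)
        {u | (toepU k p hpk u * (toepU k p hpk u)ᵀ -
              ((1 / 2 : ℝ) * ((k : ℝ) - p + 1)) •
                (1 : Matrix (Fin p × Fin m) (Fin p × Fin m) ℝ)).PosSemidef ∧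
          (((3 / 2 : ℝ) * ((k : ℝ) - p + 1)) •
              (1 : Matrix (Fin p × Fin m) (Fin p × Fin m) ℝ) -
            toepU k p hpk u * (toepU k p hpk u)ᵀ).PosSemidef} := by
  have hgeneral := toeplitz_gaussian_pe_general (by omega) hpk hδ one_half_pos (by norm_num)
    (by convert hk using 3; norm_num)
  rwa [show (1 : ℝ) - 1 / 2 = 1 / 2 by norm_num, show (1 : ℝ) + 1 / 2 = 3 / 2 by norm_num]
    at hgeneral
end
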